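/- Let [0,l] ⊂ ℝ be a compact interval, x₁,...,xₙ ∈ (0,l), and λ ≥ 0. Suppose ĝ : [0,l] → ℝ minimizes the objective F(g) = −(1/n)Σᵢ g(xᵢ) + λ·TV(g) + ∫₀ˡ e^{g(x)} dx over all functions of bounded variation on [0,l]. Then ĝ is constant on every open subinterval (a,b) ⊆ (0,l) that contains none of the points x₁,...,xₙ; that is, ĝ is piecewise constant with all discontinuities contained in {x₁,...,xₙ} ∪ {0,l}. -/

import Mathlib

open MeasureTheory Set

/-!
Let `g` minimize the objective and let `I` be an interval without observations. Overwriting `g` on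
`I` by one of its own values `g p`, `p ∈ I`, leaves the data term alone and does not increase the
variation, so the average of `exp ∘ g` over `I` is at most `exp (g p)`, for every `p ∈ I`. A
function bounded below by its own average equals it almost everywhere, so `g` takes a single value
`k` almost everywhere on `I`. If `g t ≠ k` for some `t ∈ I`, there are points on both sides of `t`
where `g = k`, and overwriting `g` by `k` on `I` saves the oscillation of `g` at `t` at no cost in
the integral. This contradicts minimality when `λ > 0`; and for `λ ≤ 0` there is no minimizer, since
a spike at an observation drives the objective to `-∞`.
-/

section Plateau

variable {α E : Type*} {f : α → E} {I s : Set α} {k : E} {p q t : α}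

open Classical in
/-- The function `f` overwritten by the constant `k` on the set `I`: the competitor to which a
minimizer is compared. -/
noncomputable def plateau (f : α → E) (I : Set α) (k : E) : α → E :=
  I.piecewise (fun _ => k) f

lemma plateau_of_mem (ht : t ∈ I) : plateau f I k t = k :=
  if_pos ht

lemma plateau_of_notMem (ht : t ∉ I) : plateau f I k t = f t :=
  if_neg ht

lemma comp_plateau {β : Type*} (φ : E → β) : φ ∘ plateau f I k = plateau (φ ∘ f) I (φ k) := by
  funext t
  by_cases ht : t ∈ I
  · simp only [Function.comp_apply, plateau_of_mem ht]
  · simp only [Function.comp_apply, plateau_of_notMem ht]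

variable [LinearOrder α] [PseudoEMetricSpace E]

lemma monotone_plateau_id (hI : I.OrdConnected) (hp : p ∈ I) : Monotone (plateau id I p) := by
  intro u v huv
  by_cases hu : u ∈ I <;> by_cases hv : v ∈ I
  · rw [plateau_of_mem hu, plateau_of_mem hv]
  · rw [plateau_of_mem hu, plateau_of_notMem hv]
    exact le_of_not_ge fun hvp => hv (hI.out hu hp ⟨huv, hvp⟩)
  · rw [plateau_of_notMem hu, plateau_of_mem hv]
    exact le_of_not_ge fun hpu => hu (hI.out hp hv ⟨hpu, huv⟩)
  · rwa [plateau_of_notMem hu, plateau_of_notMem hv]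

lemma eVariationOn_plateau_le (hI : I.OrdConnected) (hp : p ∈ I) (hps : p ∈ s) :
    eVariationOn (plateau f I (f p)) s ≤ eVariationOn f s := by
  have hmaps : MapsTo (plateau id I p) s s := by
    intro t ht
    by_cases htI : t ∈ I
    · rwa [plateau_of_mem htI]
    · rwa [plateau_of_notMem htI]
  have hcomp : plateau f I (f p) = f ∘ plateau id I p := (comp_plateau f).symm
  rw [hcomp]
  exact eVariationOn.comp_le_of_monotoneOn f _ ((monotone_plateau_id hI hp).monotoneOn s) hmaps

lemma eVariationOn_inter_Iic_add_inter_Ici (f : α → E) (hp : p ∈ s) :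
    eVariationOn f (s ∩ Iic p) + eVariationOn f (s ∩ Ici p) = eVariationOn f s := by
  have hgreatest : IsGreatest (s ∩ Iic p) p := ⟨⟨hp, le_rfl⟩, fun _ h => h.2⟩
  have hleast : IsLeast (s ∩ Ici p) p := ⟨⟨hp, le_rfl⟩, fun _ h => h.2⟩
  rw [← eVariationOn.union f hgreatest hleast, ← inter_union_distrib_left, Iic_union_Ici,
    inter_univ]

lemma eVariationOn_inter_Iic_add_inter_Icc_add_inter_Ici (f : α → E) (hp : p ∈ s) (hq : q ∈ s)
    (hpq : p ≤ q) :
    eVariationOn f (s ∩ Iic p) + eVariationOn f (s ∩ Icc p q) + eVariationOn f (s ∩ Ici q)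
      = eVariationOn f s := by
  have hleft := eVariationOn_inter_Iic_add_inter_Ici f (s := s ∩ Iic q) ⟨hp, hpq⟩
  rw [inter_assoc, inter_eq_right.2 (Iic_subset_Iic.2 hpq), inter_assoc, inter_comm (Iic q),
    Ici_inter_Iic] at hleft
  rw [hleft, eVariationOn_inter_Iic_add_inter_Ici f hq]

lemma eVariationOn_plateau_add_inter_Icc_le (hI : I.OrdConnected) (hp : p ∈ I) (hps : p ∈ s)
    (hq : q ∈ I) (hqs : q ∈ s) (hpq : p ≤ q) (hfpq : f p = f q) :
    eVariationOn (plateau f I (f p)) s + eVariationOn f (s ∩ Icc p q) ≤ eVariationOn f s := by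
  have hleft : eVariationOn (plateau f I (f p)) (s ∩ Iic p) ≤ eVariationOn f (s ∩ Iic p) :=
    eVariationOn_plateau_le hI hp ⟨hps, le_rfl⟩
  have hright : eVariationOn (plateau f I (f p)) (s ∩ Ici q) ≤ eVariationOn f (s ∩ Ici q) :=
    hfpq ▸ eVariationOn_plateau_le hI hq ⟨hqs, le_rfl⟩
  have hmiddle : eVariationOn (plateau f I (f p)) (s ∩ Icc p q) = 0 := by
    refine (eVariationOn.eq_zero_iff _).2 fun u hu v hv => ?_
    rw [plateau_of_mem (hI.out hp hq hu.2), plateau_of_mem (hI.out hp hq hv.2), edist_self]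
  rw [← eVariationOn_inter_Iic_add_inter_Icc_add_inter_Ici (plateau f I (f p)) hps hqs hpq,
    ← eVariationOn_inter_Iic_add_inter_Icc_add_inter_Ici f hps hqs hpq, hmiddle, add_zero,
    add_right_comm]
  gcongr

end Plateau

-- A spike at `a` only sees the sign of `t - a`, so it is a function on a three-point order.
lemma boundedVariationOn_single {α E : Type*} [AddCommGroup α] [LinearOrder α]
    [IsOrderedAddMonoid α] [PseudoMetricSpace E] [Zero E] (a : α) (y : E) (s : Set α) :
    BoundedVariationOn (Pi.single a y : α → E) s := by
  have hfactor : (Pi.single a y : α → E)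
      = (Pi.single 0 y : SignType → E) ∘ fun t => SignType.sign (t - a) := by
    funext t
    simp only [Function.comp_apply, Pi.single_apply, sign_eq_zero_iff, sub_eq_zero]
  have hmono : Monotone fun t : α => SignType.sign (t - a) :=
    SignType.sign.monotone.comp fun _ _ h => sub_le_sub_right h a
  rw [hfactor]
  exact ne_top_of_le_ne_top (BoundedVariationOn.of_finite _ univ)
    (eVariationOn.comp_le_of_monotoneOn _ _ (hmono.monotoneOn s) (mapsTo_univ _ _))

section Integral

lemma aemeasurable_restrict_of_boundedVariationOn {μ : Measure ℝ} {g : ℝ → ℝ} {s : Set ℝ}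
    (hg : BoundedVariationOn g s) (hs : MeasurableSet s) : AEMeasurable g (μ.restrict s) := by
  obtain ⟨u, v, hu, hv, rfl⟩ := hg.locallyBoundedVariationOn.exists_monotoneOn_sub_monotoneOn
  exact (aemeasurable_restrict_of_monotoneOn hs hu).sub (aemeasurable_restrict_of_monotoneOn hs hv)

lemma integrableOn_comp_of_boundedVariationOn {μ : Measure ℝ} {φ g : ℝ → ℝ} {s : Set ℝ}
    (hφ : Monotone φ) (hg : BoundedVariationOn g s) (hs : MeasurableSet s) (hμs : μ s ≠ ⊤) :
    IntegrableOn (φ ∘ g) s μ := by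
  obtain rfl | ⟨a, ha⟩ := s.eq_empty_or_nonempty
  · exact integrableOn_empty
  set V := (eVariationOn g s).toReal
  refine IntegrableOn.of_bound hμs.lt_top
    (hφ.measurable.comp_aemeasurable
      (aemeasurable_restrict_of_boundedVariationOn hg hs)).aestronglyMeasurable
    (max |φ (g a - V)| |φ (g a + V)|) ((ae_restrict_iff' hs).2 (.of_forall fun t ht => ?_))
  have hlower : g a - V ≤ g t := by linarith [hg.sub_le ha ht]
  have hupper : g t ≤ g a + V := by linarith [hg.sub_le ht ha]
  exact abs_le_max_abs_abs (hφ hlower) (hφ hupper)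

variable {α : Type*} [MeasurableSpace α] {μ : Measure α}

lemma ae_eq_average_of_average_le [IsFiniteMeasure μ] {f : α → ℝ} (hf : Integrable f μ)
    (hle : ∀ᵐ t ∂μ, ⨍ u, f u ∂μ ≤ f t) : ∀ᵐ t ∂μ, f t = ⨍ u, f u ∂μ := by
  have heq := (integral_eq_iff_of_ae_le (integrable_const _) hf hle).1 (integral_average μ f)
  filter_upwards [heq] with t ht using ht.symm

lemma setIntegral_plateau {f : α → ℝ} {I s : Set α} (k : ℝ) (hI : MeasurableSet I) (hIs : I ⊆ s)
    (hμI : μ I ≠ ⊤) (hf : IntegrableOn f s μ) :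
    ∫ t in s, plateau f I k t ∂μ = ∫ t in s, f t ∂μ - ∫ t in I, f t ∂μ + μ.real I * k := by
  classical
  have hconst : IntegrableOn (fun _ => k) I (μ.restrict s) :=
    integrableOn_const (by simpa [Measure.restrict_apply hI, inter_eq_left.2 hIs] using hμI)
  have hsplit := integral_add_compl hI hf
  have hpiece := integral_piecewise hI hconst hf.integrableOn
  rw [Measure.restrict_restrict hI, inter_eq_left.2 hIs] at hsplit hpiece
  rw [setIntegral_const, smul_eq_mul] at hpiece
  rw [plateau, hpiece]
  linarith

end Integral

section Objective

/-- The total-variation-penalized objective `D g + lam * TV g + ∫ φ ∘ g` on the set `s`, for an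
arbitrary data term `D`. The variation is read in `ℝ`, so the value is meaningful only for `g` of
bounded variation on `s`. -/
noncomputable def fusedObjective (μ : Measure ℝ) (D : (ℝ → ℝ) → ℝ) (φ : ℝ → ℝ) (lam : ℝ)
    (s : Set ℝ) (g : ℝ → ℝ) : ℝ :=
  D g + lam * (eVariationOn g s).toReal + ∫ t in s, φ (g t) ∂μ

variable {μ : Measure ℝ} {D : (ℝ → ℝ) → ℝ} {φ : ℝ → ℝ} {lam : ℝ} {s I X : Set ℝ} {g : ℝ → ℝ}

lemma pos_of_bddBelow_fusedObjective [NullSingletonClass μ]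
    (hbdd : BddBelow (fusedObjective μ D φ lam s '' {g | BoundedVariationOn g s}))
    {a : ℝ} (hD : Filter.Tendsto (fun M => D (Pi.single a M)) .atTop .atBot) : 0 < lam := by
  by_contra! hlam
  obtain ⟨B, hB⟩ := hbdd
  obtain ⟨M, hM⟩ := (hD.eventually_lt_atBot (B - ∫ _ in s, φ 0 ∂μ)).exists
  have hspike : (∫ t in s, φ ((Pi.single a M : ℝ → ℝ) t) ∂μ) = ∫ _ in s, φ 0 ∂μ := by
    refine integral_congr_ae (ae_restrict_of_ae ?_)
    filter_upwards [Measure.ae_ne μ a] with t ht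
    rw [Pi.single_eq_of_ne ht]
  have hvar : lam * (eVariationOn (Pi.single a M : ℝ → ℝ) s).toReal ≤ 0 :=
    mul_nonpos_of_nonpos_of_nonneg hlam ENNReal.toReal_nonneg
  have hlower : B ≤ fusedObjective μ D φ lam s (Pi.single a M) :=
    hB (mem_image_of_mem _ (boundedVariationOn_single a M s))
  rw [fusedObjective, hspike] at hlower
  linarith

variable (hmin : IsMinOn (fusedObjective μ D φ lam s) {g | BoundedVariationOn g s} g)
  (hg : BoundedVariationOn g s) (hD : DependsOn D X) (hφ : Monotone φ) (hs : MeasurableSet s)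
  (hμs : μ s ≠ ⊤) (hIs : I ⊆ s) (hIX : Disjoint I X)

include hmin hg hD hφ hs hμs hIs hIX

lemma variation_add_setIntegral_le_plateau (hI : MeasurableSet I) {k : ℝ}
    (hk : BoundedVariationOn (plateau g I k) s) :
    lam * (eVariationOn g s).toReal + ∫ t in I, φ (g t) ∂μ
      ≤ lam * (eVariationOn (plateau g I k) s).toReal + μ.real I * φ k := by
  have hdata : D (plateau g I k) = D g :=
    hD fun t ht => plateau_of_notMem fun htI => hIX.notMem_of_mem_left htI ht
  have hint : ∫ t in s, φ (plateau g I k t) ∂μ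
      = ∫ t in s, φ (g t) ∂μ - ∫ t in I, φ (g t) ∂μ + μ.real I * φ k := by
    have := setIntegral_plateau (φ k) hI hIs (measure_ne_top_of_subset hIs hμs)
      (integrableOn_comp_of_boundedVariationOn hφ hg hs hμs)
    rwa [← comp_plateau] at this
  have hle : fusedObjective μ D φ lam s g ≤ fusedObjective μ D φ lam s (plateau g I k) := hmin hk
  rw [fusedObjective, fusedObjective, hdata, hint] at hle
  linarith

lemma setIntegral_comp_le_of_mem (hlam : 0 ≤ lam) (hI : I.OrdConnected) {p : ℝ} (hp : p ∈ I) :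
    ∫ t in I, φ (g t) ∂μ ≤ μ.real I * φ (g p) := by
  have hvar : eVariationOn (plateau g I (g p)) s ≤ eVariationOn g s :=
    eVariationOn_plateau_le hI hp (hIs hp)
  have hcompare := variation_add_setIntegral_le_plateau hmin hg hD hφ hs hμs hIs hIX
    hI.measurableSet (ne_top_of_le_ne_top hg hvar)
  have hpenalty := mul_le_mul_of_nonneg_left (ENNReal.toReal_mono hg hvar) hlam
  linarith

lemma exists_mem_comp_eq_setAverage [μ.IsOpenPosMeasure] (hlam : 0 ≤ lam) (hI : I.OrdConnected)
    {U : Set ℝ} (hU : IsOpen U) (hU₀ : U.Nonempty) (hUI : U ⊆ I) :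
    ∃ p ∈ U, φ (g p) = ⨍ t in I, φ (g t) ∂μ := by
  have hμI : μ I ≠ ⊤ := measure_ne_top_of_subset hIs hμs
  have hμU : μ U ≠ 0 := (hU.measure_pos μ hU₀).ne'
  have hμI_pos : 0 < μ.real I := ENNReal.toReal_pos (fun h => hμU (measure_mono_null hUI h)) hμI
  have hle : ∀ p ∈ I, ⨍ t in I, φ (g t) ∂μ ≤ φ (g p) := fun p hp => by
    rw [setAverage_eq, smul_eq_mul, inv_mul_le_iff₀ hμI_pos]
    exact setIntegral_comp_le_of_mem hmin hg hD hφ hs hμs hIs hIX hlam hI hp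
  have hint : IntegrableOn (φ ∘ g) I μ :=
    (integrableOn_comp_of_boundedVariationOn hφ hg hs hμs).mono_set hIs
  have : Fact (μ I < ⊤) := ⟨hμI.lt_top⟩
  have hae := ae_eq_average_of_average_le hint
    ((ae_restrict_iff' hI.measurableSet).2 (.of_forall hle))
  have : (ae (μ.restrict U)).NeBot := ae_restrict_neBot.2 hμU
  obtain ⟨p, hp, hpU⟩ := ((ae_restrict_of_ae_restrict_of_subset hUI hae).and
    (ae_restrict_mem hU.measurableSet)).exists
  exact ⟨p, hpU, hp⟩

lemma eq_of_mem_Icc_of_comp_eq_setAverage (hlam : 0 < lam) (hI : I.OrdConnected) {p q t : ℝ}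
    (hp : p ∈ I) (hq : q ∈ I) (ht : t ∈ Icc p q) (hpq : g p = g q)
    (hgp : φ (g p) = ⨍ u in I, φ (g u) ∂μ) : g t = g p := by
  have hvar : eVariationOn (plateau g I (g p)) s + edist (g t) (g p) ≤ eVariationOn g s :=
    calc _ ≤ eVariationOn (plateau g I (g p)) s + eVariationOn g (s ∩ Icc p q) := by
          gcongr
          exact eVariationOn.edist_le g ⟨hIs (hI.out hp hq ht), ht⟩
            ⟨hIs hp, left_mem_Icc.2 (ht.1.trans ht.2)⟩
      _ ≤ _ := eVariationOn_plateau_add_inter_Icc_le hI hp (hIs hp) hq (hIs hq)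
          (ht.1.trans ht.2) hpq
  have hBV : BoundedVariationOn (plateau g I (g p)) s :=
    ne_top_of_le_ne_top hg (le_self_add.trans hvar)
  have hsaving : (eVariationOn (plateau g I (g p)) s).toReal + dist (g t) (g p)
      ≤ (eVariationOn g s).toReal := by
    rw [dist_edist, ← ENNReal.toReal_add hBV (edist_ne_top _ _)]
    exact ENNReal.toReal_mono hg hvar
  have hintegral : μ.real I * φ (g p) = ∫ u in I, φ (g u) ∂μ := by
    rw [hgp, ← smul_eq_mul, measure_smul_setAverage _ (measure_ne_top_of_subset hIs hμs)]
  have hcompare := variation_add_setIntegral_le_plateau hmin hg hD hφ hs hμs hIs hIX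
    hI.measurableSet hBV
  have hdist : lam * dist (g t) (g p) ≤ 0 := by
    linarith [mul_le_mul_of_nonneg_left hsaving hlam.le]
  exact dist_le_zero.1 (nonpos_of_mul_nonpos_right hdist hlam)

end Objective

theorem exists_forall_mem_Ioo_eq_of_isMinOn {μ : Measure ℝ} [μ.IsOpenPosMeasure]
    {D : (ℝ → ℝ) → ℝ} {φ : ℝ → ℝ} {lam : ℝ} {s X : Set ℝ} {g : ℝ → ℝ} {c d : ℝ}
    (hmin : IsMinOn (fusedObjective μ D φ lam s) {g | BoundedVariationOn g s} g)
    (hg : BoundedVariationOn g s) (hD : DependsOn D X) (hφ : StrictMono φ) (hlam : 0 < lam)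
    (hs : MeasurableSet s) (hμs : μ s ≠ ⊤) (hcd : c < d) (hsub : Ioo c d ⊆ s)
    (hX : Disjoint (Ioo c d) X) : ∃ k, ∀ t ∈ Ioo c d, g t = k := by
  have hpoint {a b : ℝ} (hab : a < b) (hI : Ioo a b ⊆ Ioo c d) :=
    exists_mem_comp_eq_setAverage hmin hg hD hφ.monotone hs hμs hsub hX hlam.le ordConnected_Ioo
      isOpen_Ioo (nonempty_Ioo.2 hab) hI
  obtain ⟨m, -, hm⟩ := hpoint hcd subset_rfl
  refine ⟨g m, fun t ht => ?_⟩
  obtain ⟨p, hp, hgp⟩ := hpoint ht.1 (Ioo_subset_Ioo_right ht.2.le)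
  obtain ⟨q, hq, hgq⟩ := hpoint ht.2 (Ioo_subset_Ioo_left ht.1.le)
  calc g t = g p := eq_of_mem_Icc_of_comp_eq_setAverage hmin hg hD hφ.monotone hs hμs hsub hX hlam
        ordConnected_Ioo ⟨hp.1, hp.2.trans ht.2⟩ ⟨ht.1.trans hq.1, hq.2⟩ ⟨hp.2.le, hq.1.le⟩
        (hφ.injective (hgp.trans hgq.symm)) hgp
    _ = g m := hφ.injective (hgp.trans hm.symm)

section EmpiricalLoss

variable {n : ℕ} {x : Fin n → ℝ}

/-- Minus the mean of `g` over the observations `x`: the mean negative log-likelihood of a sample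
with log-density `g`. -/
noncomputable def empiricalLoss (x : Fin n → ℝ) (g : ℝ → ℝ) : ℝ :=
  -(1 / (n : ℝ)) * ∑ i, g (x i)

lemma dependsOn_empiricalLoss : DependsOn (empiricalLoss x) (range x) := fun g h hgh => by
  simp only [empiricalLoss, hgh _ (mem_range_self _)]

lemma tendsto_empiricalLoss_single (j : Fin n) :
    Filter.Tendsto (fun M => empiricalLoss x (Pi.single (x j) M)) .atTop .atBot := by
  have hn : 0 < (n : ℝ) := Nat.cast_pos.2 j.pos
  have hlinear : Filter.Tendsto (fun M : ℝ => -(1 / (n : ℝ)) * M) .atTop .atBot :=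
    Filter.tendsto_id.const_mul_atTop_of_neg (neg_neg_of_pos (one_div_pos.2 hn))
  refine Filter.tendsto_atBot_mono' _ ?_ hlinear
  filter_upwards [Filter.eventually_ge_atTop 0] with M hM
  have hnonneg : (0 : ℝ → ℝ) ≤ Pi.single (x j) M := Pi.single_nonneg.2 hM
  have hsum : M ≤ ∑ i, (Pi.single (x j) M : ℝ → ℝ) (x i) :=
    calc M = (Pi.single (x j) M : ℝ → ℝ) (x j) := by rw [Pi.single_eq_same]
      _ ≤ _ := Finset.single_le_sum (f := fun i => (Pi.single (x j) M : ℝ → ℝ) (x i))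
          (fun i _ => hnonneg (x i)) (Finset.mem_univ j)
  exact mul_le_mul_of_nonpos_left hsum (neg_nonpos.2 (one_div_pos.2 hn).le)

end EmpiricalLoss

theorem stmt_1_general {μ : Measure ℝ} [μ.IsOpenPosMeasure] [NullSingletonClass μ]
    {D : (ℝ → ℝ) → ℝ} {φ : ℝ → ℝ} {lam : ℝ} {s X : Set ℝ} {g : ℝ → ℝ} {a : ℝ}
    (hD : DependsOn D X) (hspike : Filter.Tendsto (fun M => D (Pi.single a M)) .atTop .atBot)
    (hφ : StrictMono φ) (hs : MeasurableSet s) (hμs : μ s ≠ ⊤) (hg : BoundedVariationOn g s)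
    (hmin : IsMinOn (fusedObjective μ D φ lam s) {g | BoundedVariationOn g s} g)
    {c d : ℝ} (hcd : c < d) (hsub : Ioo c d ⊆ s) (hX : Disjoint (Ioo c d) X) :
    ∃ k, ∀ t ∈ Ioo c d, g t = k := by
  have hbdd : BddBelow (fusedObjective μ D φ lam s '' {g | BoundedVariationOn g s}) :=
    ⟨fusedObjective μ D φ lam s g, forall_mem_image.2 hmin⟩
  exact exists_forall_mem_Ioo_eq_of_isMinOn hmin hg hD hφ
    (pos_of_bddBelow_fusedObjective hbdd hspike) hs hμs hcd hsub hX

/-- Representer theorem.  A minimizer of the fused density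
objective `F g = -(1/n) Σᵢ g(xᵢ) + λ·TV(g) + ∫₀ˡ e^{g}` over functions of
bounded variation on `[0,l]` is constant on every open subinterval of `(0,l)`
containing no observation; i.e. it is piecewise constant with all
discontinuities in `{x₁,…,xₙ} ∪ {0,l}`. -/
theorem stmt_1
    (l : ℝ) (hl : 0 < l)
    (n : ℕ) (hn : 1 ≤ n)
    (x : Fin n → ℝ) (hx : ∀ i, x i ∈ Ioo 0 l)
    (lam : ℝ) (hlam : 0 ≤ lam)
    (F : (ℝ → ℝ) → ℝ)
    (hF : ∀ g : ℝ → ℝ,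
      F g = -(1 / (n : ℝ)) * ∑ i, g (x i)
        + lam * (eVariationOn g (Icc 0 l)).toReal
        + ∫ t in Icc 0 l, Real.exp (g t))
    (ghat : ℝ → ℝ)
    (hghatBV : eVariationOn ghat (Icc 0 l) ≠ ⊤)
    (hmin : ∀ g : ℝ → ℝ, eVariationOn g (Icc 0 l) ≠ ⊤ → F ghat ≤ F g) :
    ∀ c d : ℝ, c < d → Ioo c d ⊆ Ioo 0 l → (∀ i, x i ∉ Ioo c d) →
      ∃ k : ℝ, ∀ t ∈ Ioo c d, ghat t = k := by
  intro c d hcd hsub hobs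
  obtain rfl : F = fusedObjective volume (empiricalLoss x) Real.exp lam (Icc 0 l) := funext hF
  exact stmt_1_general dependsOn_empiricalLoss (tendsto_empiricalLoss_single ⟨0, hn⟩)
    Real.exp_strictMono measurableSet_Icc measure_Icc_lt_top.ne hghatBV hmin hcd
    (hsub.trans Ioo_subset_Icc_self) (disjoint_right.2 (forall_mem_range.2 hobs))
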